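/- arXiv:1610.10090 — 7 statements merged into one kernel-verified Lean document; each statement's English description precedes it below -/
import Mathlib

section
/- Let N ≥ 3, let d ≥ 1, let k ∈ {1,…,N}, and let δ : {1,…,N−1} → {1,…,N} be the increasing bijection onto {1,…,N}∖{k}. Define the deleted surface-tension matrix σ'_{ij} = σ_{δ(i)δ(j)} (1 ≤ i,j ≤ N−1) and the corresponding (N−2)×(N−2) matrix Λ'_{ij} = (3/√2)·η·(σ'_{i,N−1} + σ'_{j,N−1} − σ'_{ij}). If v_1, …, v_N ∈ ℝ^d satisfy v_1 + ⋯ + v_N = 0 and v_k = 0, then Σ_{i,j=1}^{N−1} Λ_{ij} (v_i · v_j) = Σ_{i,j=1}^{N−2} Λ'_{ij} (v_{δ(i)} · v_{δ(j)}). (This is the algebraic core of the reduction consistency of the N-phase gradient free-energy term: if one fluid phase is absent, the N-phase mixing-energy quadratic form reduces to the (N−1)-phase one.) -/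
open Matrix

/- When the `v i` sum to zero, adding a term `a i + b j` to the coefficients of
`∑ i, ∑ j, A i j • B (v i) (v j)` does not change the sum. Up to such a term `Λ` is `-c • σ`, and
its row and column at the reference phase vanish, so the `Λ`-form is `-c` times the sum of
`σ i j • B (v i) (v j)` over all pairs of phases. That sum depends neither on the reference phase
nor on the order of the phases, and absent phases contribute nothing to it. -/

section PairSum

variable {ι R M P : Type*} [Fintype ι] [CommSemiring R] [AddCommMonoid M] [Module R M]
  [AddCommMonoid P] [Module R P]

/-- The quadratic form in a family of vectors `v` with coefficient matrix `A`, the vectors being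
paired by `B`. Both the mixing energy and the sum of all pairwise surface-tension terms have this
shape. -/
def pairSum (B : M →ₗ[R] M →ₗ[R] P) (A : Matrix ι ι R) (v : ι → M) : P :=
  ∑ i, ∑ j, A i j • B (v i) (v j)

variable (B : M →ₗ[R] M →ₗ[R] P)

theorem pairSum_add (A A' : Matrix ι ι R) (v : ι → M) :
    pairSum B (A + A') v = pairSum B A v + pairSum B A' v := by
  simp only [pairSum, Matrix.add_apply, add_smul, Finset.sum_add_distrib]

theorem pairSum_smul (c : R) (A : Matrix ι ι R) (v : ι → M) :
    pairSum B (c • A) v = c • pairSum B A v := by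
  simp only [pairSum, Matrix.smul_apply, smul_assoc, Finset.smul_sum]

theorem pairSum_of_add_eq_zero (a b : ι → R) {v : ι → M} (hv : ∑ i, v i = 0) :
    pairSum B (of fun i j => a i + b j) v = 0 := by
  have row_sum (i : ι) : ∑ j, B (v i) (v j) = 0 := by rw [← map_sum, hv, map_zero]
  have column_sum (j : ι) : ∑ i, B (v i) (v j) = 0 := by
    rw [← LinearMap.sum_apply, ← map_sum, hv, map_zero, LinearMap.zero_apply]
  calc pairSum B (of fun i j => a i + b j) v
      = ∑ i, a i • ∑ j, B (v i) (v j) + ∑ j, b j • ∑ i, B (v i) (v j) := by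
        simp only [pairSum, of_apply, add_smul, Finset.sum_add_distrib, Finset.smul_sum]
        rw [Finset.sum_comm (f := fun i j => b j • B (v i) (v j))]
    _ = 0 := by simp only [row_sum, column_sum, smul_zero, Finset.sum_const_zero, add_zero]

theorem pairSum_submatrix {κ : Type*} [Fintype κ] {e : κ → ι} (he : Function.Injective e)
    (A : Matrix ι ι R) {v : ι → M} (hv : ∀ i ∉ Set.range e, v i = 0) :
    pairSum B (A.submatrix e e) (v ∘ e) = pairSum B A v := by
  refine Fintype.sum_of_injective e he _ _ (fun i hi => ?_) fun k => ?_
  · simp only [hv i hi, map_zero, LinearMap.zero_apply, smul_zero, Finset.sum_const_zero]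
  · refine Fintype.sum_of_injective e he _ _ (fun j hj => ?_) fun _ => rfl
    rw [hv j hj, map_zero, smul_zero]

end PairSum

section MixingEnergy

variable {R M P : Type*} [CommRing R] [AddCommGroup M] [Module R M] [AddCommGroup P] [Module R P]

/-- The matrix `Λ` of mixing-energy coefficients for `n + 1` phases with surface tensions `σ`. The
last phase is the reference phase, and `c` stands for `(3/√2)·η`. -/
def mixingEnergyMatrix {n : ℕ} (c : R) (σ : Matrix (Fin (n + 1)) (Fin (n + 1)) R) :
    Matrix (Fin n) (Fin n) R :=
  of fun i j => c * (σ i.castSucc (Fin.last n) + σ j.castSucc (Fin.last n)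
    - σ i.castSucc j.castSucc)

variable (B : M →ₗ[R] M →ₗ[R] P)

theorem pairSum_mixingEnergyMatrix {n : ℕ} (c : R) {σ : Matrix (Fin (n + 1)) (Fin (n + 1)) R}
    (hσsymm : σ.IsSymm) (hσdiag : σ (Fin.last n) (Fin.last n) = 0)
    {v : Fin (n + 1) → M} (hv : ∑ i, v i = 0) :
    pairSum B (mixingEnergyMatrix c σ) (v ∘ Fin.castSucc) = -c • pairSum B σ v := by
  let a (i : Fin (n + 1)) : R := c * σ i (Fin.last n)
  have extend_to_all_phases : pairSum B (mixingEnergyMatrix c σ) (v ∘ Fin.castSucc) =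
      pairSum B ((of fun i j => a i + a j) + -c • σ) v := by
    have last_row (j : Fin (n + 1)) : a (Fin.last n) + a j + -c * σ (Fin.last n) j = 0 := by
      simp only [a, hσdiag, hσsymm.apply j (Fin.last n)]
      ring
    have last_column (i : Fin (n + 1)) : a i + a (Fin.last n) + -c * σ i (Fin.last n) = 0 := by
      simp only [a, hσdiag]
      ring
    have entry (i j : Fin n) : mixingEnergyMatrix c σ i j =
        a i.castSucc + a j.castSucc + -c * σ i.castSucc j.castSucc := by
      simp only [mixingEnergyMatrix, of_apply, a]
      ring
    simp only [pairSum, Fin.sum_univ_castSucc, Function.comp_apply, entry, Matrix.add_apply,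
      Matrix.smul_apply, of_apply, smul_eq_mul, last_row, last_column, zero_smul,
      Finset.sum_const_zero, add_zero]
  rw [extend_to_all_phases, pairSum_add, pairSum_of_add_eq_zero B a a hv, zero_add, pairSum_smul]

theorem stmt2_general {m n : ℕ} (c : R) {σ : Matrix (Fin (n + 1)) (Fin (n + 1)) R}
    (hσsymm : σ.IsSymm) (hσdiag : ∀ i, σ i i = 0)
    {δ : Fin (m + 1) → Fin (n + 1)} (hδ : Function.Injective δ)
    {v : Fin (n + 1) → M} (hv : ∑ i, v i = 0) (hvδ : ∀ i ∉ Set.range δ, v i = 0) :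
    pairSum B (mixingEnergyMatrix c σ) (v ∘ Fin.castSucc) =
      pairSum B (mixingEnergyMatrix c (σ.submatrix δ δ)) (v ∘ δ ∘ Fin.castSucc) := by
  have hvδ_sum : ∑ i, (v ∘ δ) i = 0 :=
    (Fintype.sum_of_injective δ hδ _ v hvδ fun _ => rfl).trans hv
  calc pairSum B (mixingEnergyMatrix c σ) (v ∘ Fin.castSucc)
      = -c • pairSum B σ v := pairSum_mixingEnergyMatrix B c hσsymm (hσdiag _) hv
    _ = -c • pairSum B (σ.submatrix δ δ) (v ∘ δ) := by rw [pairSum_submatrix B hδ σ hvδ]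
    _ = pairSum B (mixingEnergyMatrix c (σ.submatrix δ δ)) (v ∘ δ ∘ Fin.castSucc) :=
        (pairSum_mixingEnergyMatrix B c (hσsymm.submatrix δ) (hσdiag _) hvδ_sum).symm

end MixingEnergy

/-- Reduction consistency of the gradient (mixing-energy) quadratic form:
if `v_1 + ⋯ + v_N = 0` and `v_k = 0`, then the N-phase quadratic form
`Σ_{i,j=1}^{N−1} Λ_{ij} (v_i · v_j)` equals the (N−1)-phase one
`Σ_{i,j=1}^{N−2} Λ'_{ij} (v_{δ(i)} · v_{δ(j)})`, where `δ` is the increasing bijection of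
`{1,…,N−1}` onto `{1,…,N}∖{k}`, `σ'_{ij} = σ_{δ(i)δ(j)}`, and
`Λ'_{ij} = (3/√2)·η·(σ'_{i,N−1} + σ'_{j,N−1} − σ'_{ij})`. -/
theorem stmt2 (N : ℕ) (hN : 3 ≤ N) (d : ℕ) (hd : 1 ≤ d) (η : ℝ) (hη : 0 < η)
    (σ : Fin N → Fin N → ℝ)
    (hσsymm : ∀ i j, σ i j = σ j i)
    (hσdiag : ∀ i, σ i i = 0)
    (k : Fin N)
    (δ : Fin (N - 1) → Fin N) (hδmono : StrictMono δ) (hδrange : Set.range δ = {k}ᶜ)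
    (v : Fin N → Fin d → ℝ) (hv : ∑ i, v i = 0) (hvk : v k = 0) :
    (∑ i : Fin (N - 1), ∑ j : Fin (N - 1),
        (3 / Real.sqrt 2 * η *
          (σ (Fin.castLE (N.sub_le 1) i) ⟨N - 1, by omega⟩
            + σ (Fin.castLE (N.sub_le 1) j) ⟨N - 1, by omega⟩
            - σ (Fin.castLE (N.sub_le 1) i) (Fin.castLE (N.sub_le 1) j)))
          * (v (Fin.castLE (N.sub_le 1) i) ⬝ᵥ v (Fin.castLE (N.sub_le 1) j)))
      = ∑ i : Fin (N - 2), ∑ j : Fin (N - 2),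
          (3 / Real.sqrt 2 * η *
            (σ (δ (Fin.castLE (by omega) i)) (δ ⟨N - 2, by omega⟩)
              + σ (δ (Fin.castLE (by omega) j)) (δ ⟨N - 2, by omega⟩)
              - σ (δ (Fin.castLE (by omega) i)) (δ (Fin.castLE (by omega) j))))
            * (v (δ (Fin.castLE (by omega) i)) ⬝ᵥ v (δ (Fin.castLE (by omega) j))) := by
  obtain ⟨m, rfl⟩ : ∃ m, N = m + 2 := ⟨N - 2, by omega⟩
  have hvδ (i : Fin (m + 2)) (hi : i ∉ Set.range δ) : v i = 0 := by
    rw [hδrange, Set.notMem_compl_iff, Set.mem_singleton_iff] at hi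
    rw [hi, hvk]
  exact (stmt2_general (m := m) (n := m + 1) (σ := σ) (δ := δ) (dotProductBilin ℝ ℝ)
    (3 / √2 * η) (IsSymm.ext fun i j => hσsymm j i) hσdiag hδmono.injective hv hvδ :)
end

section
/- Let N ≥ 2. The (N−1)×(N−1) matrix Λ is positive definite if and only if −Σ_{i,j=1}^{N} σ_{ij} x_i x_j > 0 for every nonzero x ∈ ℝ^N with x_1 + ⋯ + x_N = 0. -/
open Matrix

/-! Let `B` be the matrix whose columns are `e_i - e_N` for `i < N`. It maps `ℝ^(N-1)` bijectively
onto the hyperplane `x_1 + ⋯ + x_N = 0`, and because `σ_NN = 0` the matrix `Λ` is a positive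
multiple of `-Bᵀ σ B`. Up to this factor, the quadratic form of `Λ` is therefore the restriction
of the form of `-σ` to the hyperplane, read in the coordinates `x_1, …, x_(N-1)`. -/

theorem dotProduct_mulVec_eq_sum_sum {m n R : Type*} [Fintype m] [Fintype n] [NonUnitalSemiring R]
    (A : Matrix m n R) (u : m → R) (v : n → R) :
    u ⬝ᵥ A *ᵥ v = ∑ i, ∑ j, u i * A i j * v j := by
  simp only [dotProduct, mulVec, Finset.mul_sum, mul_assoc]

theorem posDef_conjTranspose_mul_mul_iff {m n R : Type*} [Fintype m] [Fintype n]
    [Ring R] [PartialOrder R] [StarRing R] {A : Matrix m m R} (hA : A.IsHermitian)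
    {B : Matrix m n R} (hB : Function.Injective B.mulVec) :
    (Bᴴ * A * B).PosDef ↔ ∀ x ∈ Set.range B.mulVec, x ≠ 0 → 0 < star x ⬝ᵥ A *ᵥ x := by
  have form_eq (y : n → R) : star y ⬝ᵥ (Bᴴ * A * B) *ᵥ y = star (B *ᵥ y) ⬝ᵥ A *ᵥ (B *ᵥ y) := by
    simp only [star_mulVec, dotProduct_mulVec, vecMul_vecMul]
  have ne_zero_iff (y : n → R) : B *ᵥ y ≠ 0 ↔ y ≠ 0 := by
    simpa only [mulVec_zero] using hB.ne_iff (x := y) (y := 0)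
  simp only [posDef_iff_dotProduct_mulVec, isHermitian_conjTranspose_mul_mul B hA, true_and,
    Set.forall_mem_range, form_eq, ne_zero_iff]

section DifferenceMatrix

variable {ι n R : Type*} [DecidableEq ι] [Ring R]

variable (R) in
/-- The matrix with columns `e_{f j} - e_o`. When `f` enumerates without repetition the
indices other than the base point `o`, it parametrizes the vectors with coordinate sum zero by
their coordinates away from `o`. -/
def differenceMatrix (o : ι) (f : n → ι) : Matrix ι n R :=
  (1 : Matrix ι ι R).submatrix id f - (1 : Matrix ι ι R).submatrix id fun _ ↦ o

theorem differenceMatrix_apply (o : ι) (f : n → ι) (k : ι) (j : n) :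
    differenceMatrix R o f k j = (if k = f j then 1 else 0) - if k = o then 1 else 0 :=
  rfl

theorem conjTranspose_differenceMatrix_mul_mul_apply [Fintype ι] [StarRing R] (A : Matrix ι ι R)
    (o : ι) (f : n → ι) (i j : n) :
    ((differenceMatrix R o f)ᴴ * A * differenceMatrix R o f) i j =
      A (f i) (f j) - A (f i) o - A o (f j) + A o o := by
  simp only [mul_apply, conjTranspose_apply, differenceMatrix_apply, star_sub, apply_ite star,
    star_one, star_zero, sub_mul, mul_sub, ite_mul, mul_ite, one_mul, mul_one, zero_mul, mul_zero,
    Finset.sum_sub_distrib, Finset.sum_ite_eq', Finset.mem_univ, if_true]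
  abel

variable [Fintype n] {o : ι} {f : n → ι}

theorem differenceMatrix_mulVec_apply (hf : Function.Injective f) (ho : ∀ j, f j ≠ o) (y : n → R)
    (i : n) : (differenceMatrix R o f *ᵥ y) (f i) = y i := by
  classical
  simp [mulVec, dotProduct, differenceMatrix_apply, ho, hf.eq_iff]

theorem differenceMatrix_mulVec_injective (hf : Function.Injective f) (ho : ∀ j, f j ≠ o) :
    Function.Injective (differenceMatrix R o f).mulVec := fun y z hyz ↦ by
  funext i
  rw [← differenceMatrix_mulVec_apply hf ho y i, hyz, differenceMatrix_mulVec_apply hf ho z i]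

theorem sum_differenceMatrix_mulVec [Fintype ι] (o : ι) (f : n → ι) (y : n → R) :
    ∑ k, (differenceMatrix R o f *ᵥ y) k = 0 := by
  simp only [mulVec, dotProduct]
  rw [Finset.sum_comm]
  simp [← Finset.sum_mul, differenceMatrix_apply]

theorem differenceMatrix_mulVec_comp [Fintype ι] (hf : Function.Injective f)
    (ho : {o}ᶜ ⊆ Set.range f) (x : ι → R) :
    differenceMatrix R o f *ᵥ (x ∘ f) = x - Pi.single o (∑ i, x i) := by
  funext k
  calc (differenceMatrix R o f *ᵥ (x ∘ f)) k
      = ∑ l, ((if k = l then 1 else 0) - if k = o then 1 else 0) * x l := by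
        refine Fintype.sum_of_injective f hf _ _ (fun l hl ↦ ?_) fun _ ↦ rfl
        obtain rfl : l = o := by_contra fun hne ↦ hl (ho hne)
        rw [sub_self, zero_mul]
    _ = (x - Pi.single o (∑ i, x i) : ι → R) k := by
        simp [sub_mul, Finset.sum_sub_distrib, Pi.single_apply]

theorem range_differenceMatrix_mulVec [Fintype ι] (hf : Function.Injective f)
    (ho : {o}ᶜ ⊆ Set.range f) :
    Set.range (differenceMatrix R o f).mulVec = {x | ∑ i, x i = 0} := by
  refine Set.Subset.antisymm ?_ fun x (hx : ∑ i, x i = 0) ↦ ⟨x ∘ f, ?_⟩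
  · rintro _ ⟨y, rfl⟩
    exact sum_differenceMatrix_mulVec o f y
  · rw [differenceMatrix_mulVec_comp hf ho, hx, Pi.single_zero, sub_zero]

end DifferenceMatrix

theorem stmt3_general {ι n R : Type*} [Fintype ι] [CommRing R] [PartialOrder R] [StarRing R]
    [StarOrderedRing R] [PosMulStrictMono R] [PosMulReflectLT R]
    {σ : Matrix ι ι R} (hσ : σ.IsHermitian) {o : ι} {f : n → ι} (hf : Function.Injective f)
    (ho : Set.range f = {o}ᶜ) {c : R} (hc : 0 < c) {Λ : Matrix n n R}
    (hΛ : ∀ i j, Λ i j = c * (σ (f i) o + σ o (f j) - σ (f i) (f j) - σ o o)) :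
    Λ.PosDef ↔ ∀ x : ι → R, x ≠ 0 → ∑ i, x i = 0 →
      0 < -∑ i, ∑ j, σ i j * star (x i) * x j := by
  classical
  have : Finite n := .of_injective f hf
  have : Fintype n := .ofFinite n
  have hA : (-(c • σ)).IsHermitian := (hσ.smul (.of_nonneg hc.le)).neg
  have hΛ_eq : Λ = (differenceMatrix R o f)ᴴ * -(c • σ) * differenceMatrix R o f := by
    ext i j
    rw [hΛ, conjTranspose_differenceMatrix_mul_mul_apply]
    simp only [Matrix.neg_apply, Matrix.smul_apply, smul_eq_mul]
    ring
  have form_eq (x : ι → R) :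
      star x ⬝ᵥ -(c • σ) *ᵥ x = c * -∑ i, ∑ j, σ i j * star (x i) * x j := by
    rw [neg_mulVec, smul_mulVec, dotProduct_neg, dotProduct_smul, smul_eq_mul, mul_neg,
      dotProduct_mulVec_eq_sum_sum]
    simp only [Pi.star_apply, mul_comm (star _)]
  have ne_base (j : n) : f j ≠ o := ho.subset ⟨j, rfl⟩
  rw [hΛ_eq, posDef_conjTranspose_mul_mul_iff hA (differenceMatrix_mulVec_injective hf ne_base),
    range_differenceMatrix_mulVec hf ho.superset]
  simp only [Set.mem_ofPred_eq, form_eq, mul_pos_iff_of_pos_left hc]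
  exact forall_congr' fun _ ↦ forall_comm

/-- The matrix `Λ` with `Λ_{ij} = (3/√2)·η·(σ_{iN} + σ_{jN} − σ_{ij})` is
positive definite if and only if `−Σ_{i,j=1}^{N} σ_{ij} x_i x_j > 0` for every nonzero
`x ∈ ℝ^N` with `x_1 + ⋯ + x_N = 0`. -/
theorem stmt3 (N : ℕ) (hN : 2 ≤ N) (η : ℝ) (hη : 0 < η)
    (σ : Fin N → Fin N → ℝ)
    (hσsymm : ∀ i j, σ i j = σ j i)
    (hσdiag : ∀ i, σ i i = 0)
    (Λ : Matrix (Fin (N - 1)) (Fin (N - 1)) ℝ)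
    (hΛ : ∀ i j, Λ i j = 3 / Real.sqrt 2 * η *
      (σ (Fin.castLE (N.sub_le 1) i) ⟨N - 1, by omega⟩
        + σ (Fin.castLE (N.sub_le 1) j) ⟨N - 1, by omega⟩
        - σ (Fin.castLE (N.sub_le 1) i) (Fin.castLE (N.sub_le 1) j))) :
    Λ.PosDef ↔
      ∀ x : Fin N → ℝ, x ≠ 0 → (∑ i, x i) = 0 →
        0 < -∑ i : Fin N, ∑ j : Fin N, σ i j * x i * x j := by
  obtain ⟨M, rfl⟩ := Nat.exists_eq_add_of_le' (one_le_two.trans hN)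
  exact stmt3_general (.ext fun i j ↦ hσsymm j i) (o := Fin.last M) (Fin.castSucc_injective M)
    (Set.ext fun _ ↦ Fin.exists_castSucc_eq) (c := 3 / Real.sqrt 2 * η) (by positivity)
    fun i j ↦ by rw [hΛ, hσdiag, sub_zero, hσsymm (Fin.last M)]; rfl
end

section
/- Let N ≥ 2 and let ρ̃_1, …, ρ̃_N be positive reals; set γ̃_i = 1/ρ̃_i and Γ = Σ_{i=1}^{N} γ̃_i. Define the (N−1)×(N−1) matrices Z with entries e_{ij} = γ̃_i δ_{ij} − γ̃_i γ̃_j / Γ and Λ₁ with entries a_{ij} = ρ̃_i δ_{ij} + ρ̃_N (1 ≤ i,j ≤ N−1, δ_{ij} the Kronecker delta). Then Z·Λ₁ = I and Λ₁·Z = I; in particular Z is invertible with Z⁻¹ = Λ₁. -/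
open Matrix

/-
`Λ₁ = diag(ρ̃) + ρ̃_N 𝟏𝟏ᵀ` is a rank-one perturbation of a diagonal matrix, so by the
Sherman–Morrison formula its inverse is `diag(γ̃) - c γ̃γ̃ᵀ`, where `c` is the reciprocal of
`ρ̃_N⁻¹ + 𝟏ᵀ diag(γ̃) 𝟏 = γ̃_N + ∑_{i < N} γ̃_i = Γ`.
-/

section ShermanMorrison

variable {ι R : Type*} [Fintype ι] [DecidableEq ι] [CommRing R]

/- This shape of the Sherman–Morrison formula is free of division: where the inverses exist,
`h` says that `c⁻¹ = r⁻¹ + v ⬝ᵥ B *ᵥ u`. -/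
theorem sub_vecMulVec_mul_add_vecMulVec_eq_one {A B : Matrix ι ι R} {u v : ι → R} {c r : R}
    (hBA : B * A = 1) (h : c * (1 + r * (v ⬝ᵥ B *ᵥ u)) = r) :
    (B - c • vecMulVec (B *ᵥ u) (v ᵥ* B)) * (A + r • vecMulVec u v) = 1 := by
  set P := vecMulVec (B *ᵥ u) v
  have hBu : B * vecMulVec u v = P := mul_vecMulVec B u v
  have hvA : vecMulVec (B *ᵥ u) (v ᵥ* B) * A = P := by
    rw [vecMulVec_mul, vecMul_vecMul, hBA, vecMul_one]
  have hvu : vecMulVec (B *ᵥ u) (v ᵥ* B) * vecMulVec u v = (v ⬝ᵥ B *ᵥ u) • P := by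
    rw [vecMulVec_mul_vecMulVec, vecMulVec_smul, ← dotProduct_mulVec]
  calc (B - c • vecMulVec (B *ᵥ u) (v ᵥ* B)) * (A + r • vecMulVec u v)
      = 1 - c • P + r • (P - c • (v ⬝ᵥ B *ᵥ u) • P) := by
        simp only [sub_mul, mul_add, smul_mul_assoc, mul_smul_comm, hBA, hBu, hvA, hvu]
    _ = 1 + (r - c * (1 + r * (v ⬝ᵥ B *ᵥ u))) • P := by module
    _ = 1 := by rw [h, sub_self, zero_smul, add_zero]

end ShermanMorrison

section Field

variable {K : Type*} [Field K]

theorem diagonal_inv_sub_mul_diagonal_add_eq_one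
    {ι : Type*} [Fintype ι] [DecidableEq ι] {ρ : ι → K} {r Γ : K} (hρ : ∀ i, ρ i ≠ 0)
    (hr : r ≠ 0) (hΓ₀ : Γ ≠ 0) (hΓ : Γ = ∑ i, (ρ i)⁻¹ + r⁻¹) :
    (diagonal ρ⁻¹ - Γ⁻¹ • vecMulVec ρ⁻¹ ρ⁻¹) * (diagonal ρ + r • vecMulVec 1 1) = 1 := by
  have hdiag : diagonal ρ⁻¹ * diagonal ρ = 1 := by
    simp [hρ]
  have hright : diagonal ρ⁻¹ *ᵥ 1 = ρ⁻¹ := by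
    ext i; simp [mulVec_diagonal]
  have hleft : 1 ᵥ* diagonal ρ⁻¹ = ρ⁻¹ := by
    ext i; simp [vecMul_diagonal]
  have hscalar : Γ⁻¹ * (1 + r * (1 ⬝ᵥ diagonal ρ⁻¹ *ᵥ 1)) = r := by
    have hsum : 1 ⬝ᵥ ρ⁻¹ = Γ - r⁻¹ := by simp [hΓ, one_dotProduct]
    rw [hright, hsum]
    field_simp
    ring
  simpa only [hright, hleft] using sub_vecMulVec_mul_add_vecMulVec_eq_one hdiag hscalar

theorem stmt4_general {n : ℕ} (ρ : Fin (n + 1) → K) (hρ : ∀ i, ρ i ≠ 0)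
    (γ : Fin (n + 1) → K) (hγ : ∀ i, γ i = (ρ i)⁻¹)
    (Γ : K) (hΓ : Γ = ∑ i, γ i) (hΓ₀ : Γ ≠ 0) (Z Λ₁ : Matrix (Fin n) (Fin n) K)
    (hZ : ∀ i j, Z i j = (if i = j then γ i.castSucc else 0) - γ i.castSucc * γ j.castSucc / Γ)
    (hΛ₁ : ∀ i j, Λ₁ i j = (if i = j then ρ i.castSucc else 0) + ρ (Fin.last n)) :
    Z * Λ₁ = 1 ∧ Λ₁ * Z = 1 ∧ IsUnit Z ∧ Z⁻¹ = Λ₁ := by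
  let σ : Fin n → K := fun i ↦ ρ i.castSucc
  have hZ_eq : Z = diagonal σ⁻¹ - Γ⁻¹ • vecMulVec σ⁻¹ σ⁻¹ := by
    ext i j
    simp [hZ, hγ, σ, diagonal_apply, vecMulVec_apply, div_eq_inv_mul]
  have hΛ₁_eq : Λ₁ = diagonal σ + ρ (Fin.last n) • vecMulVec 1 1 := by
    ext i j
    simp [hΛ₁, σ, diagonal_apply]
  have hΓ_eq : Γ = ∑ i, (σ i)⁻¹ + (ρ (Fin.last n))⁻¹ := by
    simp only [hΓ, hγ, σ, Fin.sum_univ_castSucc]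
  have hZΛ₁ : Z * Λ₁ = 1 := by
    rw [hZ_eq, hΛ₁_eq]
    exact diagonal_inv_sub_mul_diagonal_add_eq_one
      (fun i ↦ hρ i.castSucc) (hρ (Fin.last n)) hΓ₀ hΓ_eq
  exact ⟨hZΛ₁, mul_eq_one_comm.mp hZΛ₁, .of_mul_eq_one _ hZΛ₁, inv_eq_right_inv hZΛ₁⟩

end Field

/-- With `γ̃_i = 1/ρ̃_i`, `Γ = Σ γ̃_i`, `Z` with entries
`e_{ij} = γ̃_i δ_{ij} − γ̃_i γ̃_j / Γ` and `Λ₁` with entries `a_{ij} = ρ̃_i δ_{ij} + ρ̃_N`,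
one has `Z·Λ₁ = I` and `Λ₁·Z = I`; in particular `Z` is invertible with `Z⁻¹ = Λ₁`. -/
theorem stmt4 (N : ℕ) (hN : 2 ≤ N)
    (ρ : Fin N → ℝ) (hρ : ∀ i, 0 < ρ i)
    (γ : Fin N → ℝ) (hγ : ∀ i, γ i = (ρ i)⁻¹)
    (Γ : ℝ) (hΓ : Γ = ∑ i, γ i)
    (Z Λ₁ : Matrix (Fin (N - 1)) (Fin (N - 1)) ℝ)
    (hZ : ∀ i j, Z i j =
      (if i = j then γ (Fin.castLE (N.sub_le 1) i) else 0)
        - γ (Fin.castLE (N.sub_le 1) i) * γ (Fin.castLE (N.sub_le 1) j) / Γ)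
    (hΛ₁ : ∀ i j, Λ₁ i j =
      (if i = j then ρ (Fin.castLE (N.sub_le 1) i) else 0) + ρ ⟨N - 1, by omega⟩) :
    Z * Λ₁ = 1 ∧ Λ₁ * Z = 1 ∧ IsUnit Z ∧ Z⁻¹ = Λ₁ := by
  obtain ⟨n, rfl⟩ := Nat.exists_eq_add_of_le' hN
  have hΓ_pos : 0 < Γ := by
    simpa only [hΓ, hγ] using Finset.sum_pos (fun i _ ↦ inv_pos.2 (hρ i)) Finset.univ_nonempty
  exact stmt4_general ρ (fun i ↦ (hρ i).ne') γ hγ Γ hΓ hΓ_pos.ne' Z Λ₁ hZ hΛ₁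
end

section
/- Let N ≥ 2 and 1 ≤ k < l ≤ N. If c ∈ ℝ^N satisfies c_1 + ⋯ + c_N = 1 and c_i = 0 for all i ∉ {k, l}, then H(c) = β·σ_{kl}·c_k²·(1 − c_k)². (Verification of assumption (𝒜2): when only fluids k and l are present, the N-phase potential free energy density reduces to the two-phase one.) -/
/-!
Every term with an absent phase vanishes because `f 0 = 0`, and the diagonal terms vanish because
`σ i i = 0`, so only the terms `(k, l)` and `(l, k)` remain. As `c l = 1 - c k`, they are governed
by `f (c k) + f (1 - c k) - f 1`, which the symmetry `f (1 - x) = f x` turns into `2 * f (c k)`.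
-/

section TwoPointSupport

variable {ι M : Type*} [Fintype ι] [AddCommMonoid M]

theorem sum_sum_eq_of_support_pair (F : ι → ι → M) {k l : ι} (hkl : k ≠ l)
    (hleft : ∀ i j, i ≠ k → i ≠ l → F i j = 0) (hright : ∀ i j, j ≠ k → j ≠ l → F i j = 0) :
    ∑ i, ∑ j, F i j = (F k k + F k l) + (F l k + F l l) := by
  have inner_sum (i : ι) : ∑ j, F i j = F i k + F i l :=
    Fintype.sum_eq_add k l hkl fun j hj => hright i j hj.1 hj.2
  have outer_sum : ∑ i, ∑ j, F i j = ∑ j, F k j + ∑ j, F l j :=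
    Fintype.sum_eq_add k l hkl fun i hi => Finset.sum_eq_zero fun j _ => hleft i j hi.1 hi.2
  rw [outer_sum, inner_sum, inner_sum]

end TwoPointSupport

section AdditivityDefect

/-- The failure of `f` to be additive at `(x, y)`; with `f` a double-well potential it is the
bracket by which a pair of phases with volume fractions `x` and `y` enters the free energy. -/
def additivityDefect {A B : Type*} [Add A] [AddGroup B] (f : A → B) (x y : A) : B :=
  f x + f y - f (x + y)

theorem additivityDefect_comm {A B : Type*} [AddCommMagma A] [AddCommGroup B] (f : A → B)
    (x y : A) : additivityDefect f x y = additivityDefect f y x := by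
  simp only [additivityDefect, add_comm]

theorem additivityDefect_zero_left {A B : Type*} [AddZeroClass A] [AddGroup B] {f : A → B}
    (hf : f 0 = 0) (y : A) : additivityDefect f 0 y = 0 := by
  simp only [additivityDefect, hf, zero_add, sub_self]

theorem additivityDefect_zero_right {A B : Type*} [AddZeroClass A] [AddGroup B] {f : A → B}
    (hf : f 0 = 0) (x : A) : additivityDefect f x 0 = 0 := by
  simp only [additivityDefect, hf, add_zero, sub_self]

theorem additivityDefect_of_reflection_symm {A B : Type*} [AddCommGroup A] [AddGroup B]
    {f : A → B} {s : A} (hf_zero : f 0 = 0) (hf_symm : ∀ x, f (s - x) = f x) {x y : A}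
    (hxy : x + y = s) : additivityDefect f x y = 2 • f x := by
  have hf_total : f s = 0 := by rw [← hf_symm, sub_self, hf_zero]
  have hy : f y = f x := by rw [eq_sub_of_add_eq' hxy, hf_symm]
  rw [additivityDefect, hxy, hf_total, hy, sub_zero, two_nsmul]

end AdditivityDefect

section PotentialEnergyDensity

variable {ι K : Type*} [Fintype ι] [Field K]

/-- The multiphase potential free energy density `H(c)`, with one phase for each element of `ι`.
The scale `β`, the surface tensions `σ` and the one-phase potential `f` are parameters; the sum
runs over ordered pairs of phases, so that each unordered pair is counted twice. -/
def potentialEnergyDensity (β : K) (σ : ι → ι → K) (f : K → K) (c : ι → K) : K :=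
  β / 2 * ∑ i, ∑ j, σ i j / 2 * additivityDefect f (c i) (c j)

variable [NeZero (2 : K)]

theorem potentialEnergyDensity_of_support_pair (β : K) {σ : ι → ι → K}
    (hσ_symm : ∀ i j, σ i j = σ j i) (hσ_diag : ∀ i, σ i i = 0) {f : K → K} (hf_zero : f 0 = 0)
    {k l : ι} (hkl : k ≠ l) {c : ι → K} (hc : ∀ i, i ≠ k → i ≠ l → c i = 0) :
    potentialEnergyDensity β σ f c = β / 2 * (σ k l * additivityDefect f (c k) (c l)) := by
  have left_absent (i j : ι) (hik : i ≠ k) (hil : i ≠ l) :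
      σ i j / 2 * additivityDefect f (c i) (c j) = 0 := by
    rw [hc i hik hil, additivityDefect_zero_left hf_zero, mul_zero]
  have right_absent (i j : ι) (hjk : j ≠ k) (hjl : j ≠ l) :
      σ i j / 2 * additivityDefect f (c i) (c j) = 0 := by
    rw [hc j hjk hjl, additivityDefect_zero_right hf_zero, mul_zero]
  have diagonal (i : ι) : σ i i / 2 * additivityDefect f (c i) (c i) = 0 := by
    rw [hσ_diag, zero_div, zero_mul]
  rw [potentialEnergyDensity, sum_sum_eq_of_support_pair _ hkl left_absent right_absent,
    diagonal, diagonal, zero_add, add_zero, hσ_symm l k, additivityDefect_comm f (c l) (c k),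
    ← add_mul, add_halves]

theorem stmt9_general (β : K) {σ : ι → ι → K} (hσ_symm : ∀ i j, σ i j = σ j i)
    (hσ_diag : ∀ i, σ i i = 0) {f : K → K} (hf_zero : f 0 = 0) (hf_symm : ∀ x, f (1 - x) = f x)
    {k l : ι} (hkl : k ≠ l) {c : ι → K} (hc : ∀ i, i ≠ k → i ≠ l → c i = 0)
    (hsum : ∑ i, c i = 1) :
    potentialEnergyDensity β σ f c = β * σ k l * f (c k) := by
  have hc_add : c k + c l = 1 := by
    rw [← hsum, Fintype.sum_eq_add k l hkl fun i hi => hc i hi.1 hi.2]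
  calc potentialEnergyDensity β σ f c
      = β / 2 * (σ k l * additivityDefect f (c k) (c l)) :=
        potentialEnergyDensity_of_support_pair β hσ_symm hσ_diag hf_zero hkl hc
    _ = β / 2 * (σ k l * (2 * f (c k))) := by
        rw [additivityDefect_of_reflection_symm hf_zero hf_symm hc_add, nsmul_eq_mul,
          Nat.cast_ofNat]
    _ = β * σ k l * f (c k) := by field

end PotentialEnergyDensity

section DoubleWell

variable {R : Type*} [CommRing R]

/-- The double-well potential with wells at `0` and `1`, the one-phase potential of the model. -/
def doubleWell (x : R) : R := x ^ 2 * (1 - x) ^ 2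

theorem doubleWell_zero : doubleWell (0 : R) = 0 := by
  rw [doubleWell, zero_pow two_ne_zero, zero_mul]

theorem doubleWell_one_sub (x : R) : doubleWell (1 - x) = doubleWell x := by
  rw [doubleWell, doubleWell, sub_sub_cancel, mul_comm]

end DoubleWell

/-- assumption (𝒜2): If `c_1 + ⋯ + c_N = 1` and `c_i = 0` for all
`i ∉ {k, l}` (`k < l`), then the N-phase potential free energy density
`H(c) = (β/2)·Σ_{i,j} (σ_{ij}/2)·[f(c_i) + f(c_j) − f(c_i + c_j)]` with
`f(c) = c²(1−c)²` reduces to `β·σ_{kl}·c_k²·(1 − c_k)²`. -/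
theorem stmt9 (N : ℕ) (hN : 2 ≤ N) (η : ℝ) (hη : 0 < η)
    (β : ℝ) (hβ : β = 6 / Real.sqrt 2 / η)
    (σ : Fin N → Fin N → ℝ)
    (hσsymm : ∀ i j, σ i j = σ j i)
    (hσdiag : ∀ i, σ i i = 0)
    (f : ℝ → ℝ) (hf : ∀ x, f x = x ^ 2 * (1 - x) ^ 2)
    (k l : Fin N) (hkl : k < l)
    (c : Fin N → ℝ) (hsum : ∑ i, c i = 1)
    (hzero : ∀ i, i ≠ k → i ≠ l → c i = 0) :
    β / 2 * ∑ i : Fin N, ∑ j : Fin N, σ i j / 2 * (f (c i) + f (c j) - f (c i + c j))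
      = β * σ k l * (c k ^ 2 * (1 - c k) ^ 2) := by
  obtain rfl : f = doubleWell := funext hf
  exact stmt9_general β hσsymm hσdiag doubleWell_zero doubleWell_one_sub hkl.ne hzero hsum
end

section
/- Let N ≥ 2 and assume the (N−1)×(N−1) matrix Λ is invertible with Θ = Λ⁻¹. Define Ĥ : ℝ^{N−1} → ℝ by Ĥ(c₁,…,c_{N−1}) = H(c₁,…,c_{N−1}, 1 − Σ_{i=1}^{N−1} c_i), and for c ∈ ℝ^{N−1} define L_i(c) = Σ_{j=1}^{N−1} Θ_{ij} ∂Ĥ/∂c_j(c) for 1 ≤ i ≤ N−1. Fix 1 ≤ k < l ≤ N and let c ∈ ℝ^{N−1} satisfy c_i = 0 for all i ≤ N−1 with i ∉ {k,l}, and, in case l ≤ N−1, c_l = 1 − c_k. Then: (i) L_i(c) = 0 for every i ≤ N−1 with i ∉ {k,l}; (ii) L_k(c) = (1/η²)·2c_k(1−c_k)(1−2c_k); (iii) if l ≤ N−1 then L_l(c) = −(1/η²)·2c_k(1−c_k)(1−2c_k). (Theorem 3: when only the pair of fluids k and l is present, the chemical-potential terms of the N-phase phase field equations reduce exactly to those of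 the corresponding two-phase system.) -/
open Matrix

/-!
In terms of all `N` volume fractions, the gradient of the potential at a state with only the phases
`k` and `l` is, up to the factor `-β/2 · f'(c_k)`, the vector `σ (e_k - e_l)`, because `f'` is odd
about `1/2` and vanishes at `0`. Let `J` be the Jacobian of `c ↦ (c₁, …, c_{N-1}, 1 - ∑ cᵢ)`. The
chain rule gives `∇Ĥ = Jᵀ ∇H`, and `Λ` is a multiple of `-Jᵀ σ J`. As the entries of `e_k - e_l` sum
to zero, it is `J v`, where `v` consists of its first `N - 1` entries, so `∇Ĥ` is a multiple of
`Λ v` and `Λ⁻¹ ∇Ĥ` one of `v`.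
-/

section PairwiseEnergy

variable {ι κ : Type*} [Fintype ι] [Fintype κ] {σ : Matrix ι ι ℝ} {f f' : ℝ → ℝ}

/-- The `N`-phase potential free energy density, without its prefactor `β / 2`, for the pairwise
surface tensions `σ` and the well `f`, as a function of all the volume fractions. -/
noncomputable def pairwiseEnergy (σ : Matrix ι ι ℝ) (f : ℝ → ℝ) (C : ι → ℝ) : ℝ :=
  ∑ i, ∑ j, σ i j / 2 * (f (C i) + f (C j) - f (C i + C j))

/-- The gradient of `pairwiseEnergy σ f` when `σ` is symmetric and `f'` is the derivative of `f`. -/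
def pairwiseGradient (σ : Matrix ι ι ℝ) (f' : ℝ → ℝ) (C : ι → ℝ) : ι → ℝ :=
  fun i => ∑ j, σ i j * (f' (C i) - f' (C i + C j))

theorem pairwiseGradient_dotProduct (hσ : σ.IsSymm) (f' : ℝ → ℝ) (C d : ι → ℝ) :
    pairwiseGradient σ f' C ⬝ᵥ d =
      ∑ i, ∑ j, σ i j / 2 * (f' (C i) * d i + f' (C j) * d j - f' (C i + C j) * (d i + d j)) := by
  let T i j := σ i j / 2 * (f' (C i) - f' (C i + C j)) * d i
  calc pairwiseGradient σ f' C ⬝ᵥ d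
      = ∑ i, ∑ j, T i j + ∑ i, ∑ j, T i j := by
        simp only [dotProduct, pairwiseGradient, T, Finset.sum_mul, ← Finset.sum_add_distrib]
        exact Finset.sum_congr rfl fun i _ => Finset.sum_congr rfl fun j _ => by ring
    _ = ∑ i, ∑ j, T i j + ∑ i, ∑ j, T j i := by rw [Finset.sum_comm (f := fun i j => T j i)]
    _ = _ := by
        simp only [T, ← Finset.sum_add_distrib]
        refine Finset.sum_congr rfl fun i _ => Finset.sum_congr rfl fun j _ => ?_
        rw [hσ.apply i j, add_comm (C j)]
        ring

theorem hasFDerivAt_pairwiseEnergy_comp {E : Type*} [NormedAddCommGroup E] [NormedSpace ℝ E]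
    {φ : E → ι → ℝ} {φ' : E →L[ℝ] ι → ℝ} {p : E} (hφ : HasFDerivAt φ φ' p) (hσ : σ.IsSymm)
    (hf : ∀ x, HasDerivAt f (f' x) x) :
    HasFDerivAt (fun q => pairwiseEnergy σ f (φ q))
      (∑ i, pairwiseGradient σ f' (φ p) i • (ContinuousLinearMap.proj i ∘L φ')) p := by
  have hφi := hasFDerivAt_pi'.1 hφ
  have hpair (i j : ι) := ((hf _).comp_hasFDerivAt p (hφi i)).fun_add
    ((hf _).comp_hasFDerivAt p (hφi j)) |>.fun_sub
      ((hf _).comp_hasFDerivAt p ((hφi i).fun_add (hφi j)))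
  refine (HasFDerivAt.fun_sum fun i _ => HasFDerivAt.fun_sum fun j _ =>
    (hpair i j).const_mul (σ i j / 2)).congr_fderiv ?_
  ext d
  simpa [dotProduct, mul_add] using (pairwiseGradient_dotProduct hσ f' (φ p) (φ' d)).symm

theorem fderiv_pairwiseEnergy_single [DecidableEq κ] {φ : (κ → ℝ) → ι → ℝ} {J : Matrix ι κ ℝ}
    {c : κ → ℝ} (hφ : HasFDerivAt φ J.mulVecLin.toContinuousLinearMap c) (hσ : σ.IsSymm)
    (hf : ∀ x, HasDerivAt f (f' x) x) (b : ℝ) (j : κ) :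
    fderiv ℝ (fun q => b * pairwiseEnergy σ f (φ q)) c (Pi.single j 1) =
      (b • Jᵀ *ᵥ pairwiseGradient σ f' (φ c)) j := by
  rw [((hasFDerivAt_pairwiseEnergy_comp hφ hσ hf).const_mul b).fderiv]
  simp [mulVec, dotProduct, mul_comm]

end PairwiseEnergy

section TwoPhase

variable {ι κ : Type*} [DecidableEq ι] {f' : ℝ → ℝ}

/-- The volume fractions of a state in which only the phases `k` and `l` are present, with
fractions `x` and `1 - x`. -/
def twoPhase (k l : ι) (x : ℝ) : ι → ℝ :=
  Pi.single k x + Pi.single l (1 - x)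

theorem apply_twoPhase_sub_apply_add {k l i j : ι} (hf₀ : f' 0 = 0) (hf₁ : ∀ x, f' (1 - x) = -f' x)
    (hkl : k ≠ l) (hij : i ≠ j) (x : ℝ) :
    f' (twoPhase k l x i) - f' (twoPhase k l x i + twoPhase k l x j) =
      -f' x * (Pi.single k 1 - Pi.single l 1 : ι → ℝ) j := by
  have hf_one : f' 1 = 0 := by simpa [hf₀] using hf₁ 0
  simp only [twoPhase, Pi.add_apply, Pi.sub_apply, Pi.single_apply]
  grind

variable [Fintype ι] [Fintype κ] {σ : Matrix ι ι ℝ}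

theorem sum_twoPhase (k l : ι) (x : ℝ) : ∑ i, twoPhase k l x i = 1 := by
  simp [twoPhase, Finset.sum_add_distrib]

theorem pairwiseGradient_twoPhase {k l : ι} (hσ : ∀ i, σ i i = 0) (hf₀ : f' 0 = 0)
    (hf₁ : ∀ x, f' (1 - x) = -f' x) (hkl : k ≠ l) (x : ℝ) :
    pairwiseGradient σ f' (twoPhase k l x) = -f' x • σ *ᵥ (Pi.single k 1 - Pi.single l 1) := by
  ext i
  rw [Pi.smul_apply, mulVec, dotProduct, Finset.smul_sum]
  refine Finset.sum_congr rfl fun j _ => ?_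
  obtain rfl | hij := eq_or_ne i j
  · simp [hσ]
  · rw [apply_twoPhase_sub_apply_add hf₀ hf₁ hkl hij, smul_eq_mul, mul_left_comm]

theorem inv_mulVec_pairwiseGradient_twoPhase [DecidableEq κ] {J : Matrix ι κ ℝ} {Λ : Matrix κ κ ℝ}
    {a : ℝ} {k l : ι} {v : κ → ℝ} (hσ : ∀ i, σ i i = 0) (hf₀ : f' 0 = 0)
    (hf₁ : ∀ x, f' (1 - x) = -f' x) (hΛ : Λ = -a • (Jᵀ * σ * J)) (hdet : IsUnit Λ.det)
    (hkl : k ≠ l) (hv : J *ᵥ v = Pi.single k 1 - Pi.single l 1) (x : ℝ) :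
    Λ⁻¹ *ᵥ (a • Jᵀ *ᵥ pairwiseGradient σ f' (twoPhase k l x)) = f' x • v := by
  have hgrad : a • Jᵀ *ᵥ pairwiseGradient σ f' (twoPhase k l x) = Λ *ᵥ (f' x • v) := by
    rw [pairwiseGradient_twoPhase hσ hf₀ hf₁ hkl, ← hv, hΛ]
    simp [mulVec_smul, mulVec_neg, neg_mulVec, smul_mulVec, mulVec_mulVec, Matrix.mul_assoc,
      smul_comm a]
  rw [hgrad, mulVec_mulVec, nonsing_inv_mul _ hdet, one_mulVec]

end TwoPhase

section VolumeFractions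

variable {n : ℕ}

/-- All the volume fractions, as a function of the independent ones: the last one makes the
sum `1`. -/
def volumeFractions (c : Fin n → ℝ) : Fin (n + 1) → ℝ :=
  Fin.snoc c (1 - ∑ i, c i)

/-- The Jacobian matrix of `volumeFractions`: the identity matrix above a row of `-1`s. -/
def volumeFractionsJacobian (n : ℕ) : Matrix (Fin (n + 1)) (Fin n) ℝ :=
  of fun i j => Fin.snoc (α := fun _ => ℝ) (Pi.single j 1) (-1) i

theorem volumeFractionsJacobian_mulVec (v : Fin n → ℝ) :
    volumeFractionsJacobian n *ᵥ v = Fin.snoc (α := fun _ => ℝ) v (-∑ i, v i) := by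
  ext i
  cases i using Fin.lastCases <;>
    simp [volumeFractionsJacobian, mulVec, dotProduct, Pi.single_apply]

theorem hasFDerivAt_volumeFractions (c : Fin n → ℝ) :
    HasFDerivAt volumeFractions (volumeFractionsJacobian n).mulVecLin.toContinuousLinearMap c := by
  have haffine : volumeFractions = fun c : Fin n → ℝ =>
      (volumeFractionsJacobian n).mulVecLin.toContinuousLinearMap c + Pi.single (Fin.last n) 1 := by
    ext c i
    cases i using Fin.lastCases <;>
      simp [volumeFractions, volumeFractionsJacobian_mulVec, neg_add_eq_sub]
  rw [haffine]
  exact (ContinuousLinearMap.hasFDerivAt _).add_const _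

theorem volumeFractions_init {C : Fin (n + 1) → ℝ} (hC : ∑ i, C i = 1) :
    volumeFractions (Fin.init C) = C := by
  have hlast : 1 - ∑ i, Fin.init C i = C (Fin.last n) := by
    rw [← hC, Fin.sum_univ_castSucc]
    simp [Fin.init]
  rw [volumeFractions, hlast, Fin.snoc_init_self]

theorem eq_init_twoPhase {k : Fin n} {l : Fin (n + 1)} {c : Fin n → ℝ} (hkl : k.castSucc ≠ l)
    (hzero : ∀ i : Fin n, (i : ℕ) ≠ k → (i : ℕ) ≠ l → c i = 0)
    (hcl : ∀ h : (l : ℕ) < n, c ⟨l, h⟩ = 1 - c k) :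
    c = Fin.init (twoPhase k.castSucc l (c k)) := by
  ext i
  obtain rfl | hik := eq_or_ne i k
  · simp [Fin.init, twoPhase, hkl]
  obtain rfl | hil := eq_or_ne i.castSucc l
  · simpa [Fin.init, twoPhase, hik] using hcl i.isLt
  · simpa [Fin.init, twoPhase, hik, hil] using hzero i (Fin.val_ne_of_ne hik) (Fin.val_ne_of_ne hil)

theorem volumeFractionsJacobian_mulVec_init {w : Fin (n + 1) → ℝ} (hw : ∑ i, w i = 0) :
    volumeFractionsJacobian n *ᵥ Fin.init w = w := by
  have hlast : -∑ i, Fin.init w i = w (Fin.last n) := by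
    rw [← zero_sub, ← hw, Fin.sum_univ_castSucc]
    simp [Fin.init]
  rw [volumeFractionsJacobian_mulVec, hlast, Fin.snoc_init_self]

theorem volumeFractionsJacobian_transpose_mul_mul_apply
    (σ : Matrix (Fin (n + 1)) (Fin (n + 1)) ℝ) (i j : Fin n) :
    ((volumeFractionsJacobian n)ᵀ * σ * volumeFractionsJacobian n) i j =
      σ i.castSucc j.castSucc - σ (Fin.last n) j.castSucc
        - (σ i.castSucc (Fin.last n) - σ (Fin.last n) (Fin.last n)) := by
  simp [mul_apply, Fin.sum_univ_castSucc, volumeFractionsJacobian, Pi.single_apply, sub_eq_add_neg]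

theorem inv_mulVec_fderiv_pairwiseEnergy_twoPhase {σ : Matrix (Fin (n + 1)) (Fin (n + 1)) ℝ}
    {Λ : Matrix (Fin n) (Fin n) ℝ} {a : ℝ} {f f' : ℝ → ℝ} {k l : Fin (n + 1)} (hσ : σ.IsSymm)
    (hσ₀ : ∀ i, σ i i = 0)
    (hΛ : ∀ i j, Λ i j = a * (σ i.castSucc (Fin.last n) + σ j.castSucc (Fin.last n)
      - σ i.castSucc j.castSucc))
    (hdet : IsUnit Λ.det) (hf : ∀ x, HasDerivAt f (f' x) x) (hf₀ : f' 0 = 0)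
    (hf₁ : ∀ x, f' (1 - x) = -f' x) (hkl : k ≠ l) (b x : ℝ) :
    (Λ⁻¹ *ᵥ fun j => fderiv ℝ (fun c => b * a * pairwiseEnergy σ f (volumeFractions c))
        (Fin.init (twoPhase k l x)) (Pi.single j 1)) =
      (b * f' x) • Fin.init (Pi.single k 1 - Pi.single l 1 : Fin (n + 1) → ℝ) := by
  set J := volumeFractionsJacobian n
  have hΛJ : Λ = -a • (Jᵀ * σ * J) := by
    ext i j
    rw [hΛ, Matrix.smul_apply, volumeFractionsJacobian_transpose_mul_mul_apply, hσ₀,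
      hσ.apply j.castSucc (Fin.last n), smul_eq_mul]
    ring
  have hv : J *ᵥ Fin.init (Pi.single k 1 - Pi.single l 1 : Fin (n + 1) → ℝ) =
      Pi.single k 1 - Pi.single l 1 :=
    volumeFractionsJacobian_mulVec_init (by simp)
  simp_rw [fderiv_pairwiseEnergy_single (hasFDerivAt_volumeFractions _) hσ hf,
    volumeFractions_init (sum_twoPhase k l x)]
  rw [mul_smul, mul_smul, mulVec_smul,
    inv_mulVec_pairwiseGradient_twoPhase hσ₀ hf₀ hf₁ hΛJ hdet hkl hv]

end VolumeFractions

theorem hasDerivAt_sq_mul_one_sub_sq (x : ℝ) :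
    HasDerivAt (fun x : ℝ => x ^ 2 * (1 - x) ^ 2) (2 * x * (1 - x) * (1 - 2 * x)) x := by
  refine ((hasDerivAt_pow 2 x).fun_mul (((hasDerivAt_id' x).const_sub 1).fun_pow 2)).congr_deriv ?_
  push_cast
  ring

theorem stmt11_general {N : ℕ} (hN : 0 < N) {η : ℝ} (hη : η ≠ 0)
    {β : ℝ} (hβ : β = 6 / Real.sqrt 2 / η)
    {σ : Fin N → Fin N → ℝ}
    (hσsymm : ∀ i j, σ i j = σ j i)
    (hσdiag : ∀ i, σ i i = 0)
    {Λ : Matrix (Fin (N - 1)) (Fin (N - 1)) ℝ}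
    (hΛdef : ∀ i j, Λ i j = 3 / Real.sqrt 2 * η *
      (σ (Fin.castLE (N.sub_le 1) i) ⟨N - 1, by omega⟩
        + σ (Fin.castLE (N.sub_le 1) j) ⟨N - 1, by omega⟩
        - σ (Fin.castLE (N.sub_le 1) i) (Fin.castLE (N.sub_le 1) j)))
    (hΛinv : IsUnit Λ.det)
    {Θ : Matrix (Fin (N - 1)) (Fin (N - 1)) ℝ} (hΘ : Θ = Λ⁻¹)
    {f f' : ℝ → ℝ} (hf : ∀ x, HasDerivAt f (f' x) x)
    (hf₀ : f' 0 = 0) (hf₁ : ∀ x, f' (1 - x) = -f' x)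
    {cf : (Fin (N - 1) → ℝ) → Fin N → ℝ}
    (hcf : ∀ (c : Fin (N - 1) → ℝ) (i : Fin N),
      cf c i = if h : (i : ℕ) < N - 1 then c ⟨i, h⟩ else 1 - ∑ m, c m)
    {Hhat : (Fin (N - 1) → ℝ) → ℝ}
    (hHhat : ∀ c : Fin (N - 1) → ℝ, Hhat c =
      β / 2 * ∑ i : Fin N, ∑ j : Fin N,
        σ i j / 2 * (f (cf c i) + f (cf c j) - f (cf c i + cf c j)))
    {L : Fin (N - 1) → (Fin (N - 1) → ℝ) → ℝ}
    (hL : ∀ (i : Fin (N - 1)) (c : Fin (N - 1) → ℝ),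
      L i c = ∑ j : Fin (N - 1), Θ i j * fderiv ℝ Hhat c (Pi.single j (1 : ℝ)))
    {k : Fin (N - 1)} {l : Fin N} (hkl : (k : ℕ) ≠ (l : ℕ))
    {c : Fin (N - 1) → ℝ}
    (hzero : ∀ i : Fin (N - 1), (i : ℕ) ≠ (k : ℕ) → (i : ℕ) ≠ (l : ℕ) → c i = 0)
    (hcl : ∀ h : (l : ℕ) < N - 1, c ⟨l, h⟩ = 1 - c k) :
    (∀ i : Fin (N - 1), (i : ℕ) ≠ (k : ℕ) → (i : ℕ) ≠ (l : ℕ) → L i c = 0)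
    ∧ L k c = 1 / η ^ 2 * f' (c k)
    ∧ ∀ h : (l : ℕ) < N - 1, L ⟨l, h⟩ c = -(1 / η ^ 2) * f' (c k) := by
  obtain ⟨n, rfl⟩ : ∃ n, N = n + 1 := ⟨N - 1, by omega⟩
  replace hkl : Fin.castSucc (n := n) k ≠ l := fun h => hkl (congrArg Fin.val h)
  have hβη : β / 2 = 1 / η ^ 2 * (3 / Real.sqrt 2 * η) := by rw [hβ]; field_simp; norm_num
  have hH : Hhat = fun c => 1 / η ^ 2 * (3 / Real.sqrt 2 * η) *
      pairwiseEnergy (of σ) f (volumeFractions c) := by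
    funext c
    have hcf_eq : cf c = volumeFractions c := funext (hcf c)
    rw [hHhat, hβη, hcf_eq]
    rfl
  have hc : c = Fin.init (twoPhase (Fin.castSucc k) l (c k)) := eq_init_twoPhase hkl hzero hcl
  have hLc (i : Fin n) : L i c = 1 / η ^ 2 * f' (c k) *
      (Pi.single (Fin.castSucc (n := n) k) 1 - Pi.single l 1 : Fin (n + 1) → ℝ) i.castSucc := by
    have hinv := inv_mulVec_fderiv_pairwiseEnergy_twoPhase (σ := of σ)
      (IsSymm.ext fun i j => hσsymm j i) hσdiag hΛdef hΛinv hf hf₀ hf₁ hkl (1 / η ^ 2) (c k)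
    rw [← hc, ← hH, ← hΘ] at hinv
    rw [hL]
    exact congrFun hinv i
  refine ⟨fun i hik hil => ?_, ?_, fun h => ?_⟩
  · rw [hLc]
    simp [Fin.ext_iff, hik, hil]
  · rw [hLc]
    simp [hkl]
  · have hl : Fin.castSucc (n := n) ⟨l, h⟩ = l := rfl
    rw [hLc, hl]
    simp [hkl.symm]

/-- Theorem 3, chemical-potential part: with `Θ = Λ⁻¹`,
`Ĥ(c₁,…,c_{N−1}) = H(c₁,…,c_{N−1}, 1 − Σ c_i)` and
`L_i(c) = Σ_j Θ_{ij} ∂Ĥ/∂c_j(c)`, if only the pair of fluids `k < l` is present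
(`c_i = 0` for `i ∉ {k,l}`, and `c_l = 1 − c_k` when `l ≤ N−1`), then
`L_i(c) = 0` for `i ∉ {k,l}`, `L_k(c) = (1/η²)·2c_k(1−c_k)(1−2c_k)`, and (if `l ≤ N−1`)
`L_l(c) = −(1/η²)·2c_k(1−c_k)(1−2c_k)`. -/
theorem stmt11 (N : ℕ) (hN : 2 ≤ N) (η : ℝ) (hη : 0 < η)
    (β : ℝ) (hβ : β = 6 / Real.sqrt 2 / η)
    (σ : Fin N → Fin N → ℝ)
    (hσsymm : ∀ i j, σ i j = σ j i)
    (hσdiag : ∀ i, σ i i = 0)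
    (Λ : Matrix (Fin (N - 1)) (Fin (N - 1)) ℝ)
    (hΛdef : ∀ i j, Λ i j = 3 / Real.sqrt 2 * η *
      (σ (Fin.castLE (N.sub_le 1) i) ⟨N - 1, by omega⟩
        + σ (Fin.castLE (N.sub_le 1) j) ⟨N - 1, by omega⟩
        - σ (Fin.castLE (N.sub_le 1) i) (Fin.castLE (N.sub_le 1) j)))
    (hΛinv : IsUnit Λ.det)
    (Θ : Matrix (Fin (N - 1)) (Fin (N - 1)) ℝ) (hΘ : Θ = Λ⁻¹)
    (f : ℝ → ℝ) (hf : ∀ x, f x = x ^ 2 * (1 - x) ^ 2)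
    -- `cf c` is the full vector of volume fractions `(c₁,…,c_{N−1}, 1 − Σ c_i)`
    (cf : (Fin (N - 1) → ℝ) → Fin N → ℝ)
    (hcf : ∀ (c : Fin (N - 1) → ℝ) (i : Fin N),
      cf c i = if h : (i : ℕ) < N - 1 then c ⟨i, h⟩ else 1 - ∑ m, c m)
    (Hhat : (Fin (N - 1) → ℝ) → ℝ)
    (hHhat : ∀ c : Fin (N - 1) → ℝ, Hhat c =
      β / 2 * ∑ i : Fin N, ∑ j : Fin N,
        σ i j / 2 * (f (cf c i) + f (cf c j) - f (cf c i + cf c j)))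
    (L : Fin (N - 1) → (Fin (N - 1) → ℝ) → ℝ)
    (hL : ∀ (i : Fin (N - 1)) (c : Fin (N - 1) → ℝ),
      L i c = ∑ j : Fin (N - 1), Θ i j * fderiv ℝ Hhat c (Pi.single j (1 : ℝ)))
    (k : Fin (N - 1)) (l : Fin N) (hkl : (k : ℕ) < (l : ℕ))
    (c : Fin (N - 1) → ℝ)
    (hzero : ∀ i : Fin (N - 1), (i : ℕ) ≠ (k : ℕ) → (i : ℕ) ≠ (l : ℕ) → c i = 0)
    (hcl : ∀ h : (l : ℕ) < N - 1, c ⟨l, h⟩ = 1 - c k) :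
    (∀ i : Fin (N - 1), (i : ℕ) ≠ (k : ℕ) → (i : ℕ) ≠ (l : ℕ) → L i c = 0)
    ∧ L k c = 1 / η ^ 2 * (2 * c k * (1 - c k) * (1 - 2 * c k))
    ∧ ∀ h : (l : ℕ) < N - 1,
        L ⟨l, h⟩ c = -(1 / η ^ 2) * (2 * c k * (1 - c k) * (1 - 2 * c k)) := by
  obtain rfl : f = fun x => x ^ 2 * (1 - x) ^ 2 := funext hf
  exact stmt11_general (by omega) hη.ne' hβ hσsymm hσdiag hΛdef hΛinv hΘ
    hasDerivAt_sq_mul_one_sub_sq (by ring) (fun x => by ring) hcf hHhat hL hkl.ne hzero hcl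
end

section
/- Let N ≥ 3, η > 0, and σ = (σ_{ij}) symmetric with σ_{ij} > 0 for i ≠ j and σ_{ii} = 0. Let t ∈ ℝ^N with t_N = 0, and define ξ_{ij} = (√2/(η·σ_{ij}))·(σ_{iN}·t_i − σ_{jN}·t_j) for i ≠ j and ξ_{ii} = 0. For the removal of phase N, define the (N−1)×(N−1) matrix σ'_{ij} = σ_{ij} (1 ≤ i,j ≤ N−1), and define t' ∈ ℝ^{N−1} by t'_i = (σ_{iN}·t_i − σ_{N−1,N}·t_{N−1})/σ_{i,N−1} for 1 ≤ i ≤ N−2 and t'_{N−1} = 0; let ξ'_{ij} = (√2/(η·σ'_{ij}))·(σ'_{i,N−1}·t'_i − σ'_{j,N−1}·t'_j) for i ≠ j and ξ'_{ii} = 0. Then ξ'_{ij} = ξ_{ij} for all 1 ≤ i,j ≤ N−1. -/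
/-!
By Young's law `σ_{in} cos θ_{in}` is a difference of two solid–fluid tensions, one for phase `i`
and one for the reference phase `n`. Taking another phase as reference therefore shifts all of these
products by one constant, which cancels in the differences that make up the coefficients `ξ_{ij}`.
-/

variable {ι ι' : Type*}

section Ring

variable {R : Type*} [Ring R]

/-- The coefficients `ξ_{ij}` of the contact-angle condition `∂_ν c_i = ∑_j ξ_{ij} c_i c_j`, where
`t i` is the cosine of the contact angle of phase `i` against the reference phase `n`. The prefactor
`√2 / (η σ_{ij})` is an arbitrary weight `w i j`, so no division occurs. -/
def contactCoeff (w σ : ι → ι → R) (n : ι) (t : ι → R) (i j : ι) : R :=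
  w i j * (σ i n * t i - σ j n * t j)

/-- Young's relation between the contact-angle cosines `t`, taken against the phase `n`, and the
cosines `t'` of a subsystem, taken against its phase `m`. The subsystem is given by the map `e`
sending its phases to those of the full system. -/
def YoungRelation (σ : ι → ι → R) (n : ι) (t : ι → R) (e : ι' → ι) (m : ι') (t' : ι' → R) : Prop :=
  ∀ i, σ (e i) (e m) * t' i = σ (e i) n * t (e i) - σ (e m) n * t (e m)

theorem contactCoeff_self (w σ : ι → ι → R) (n : ι) (t : ι → R) (i : ι) :
    contactCoeff w σ n t i i = 0 := by
  rw [contactCoeff, sub_self, mul_zero]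

theorem eq_contactCoeff_of_offDiag {w σ ξ : ι → ι → R} {n : ι} {t : ι → R}
    (hξ : ∀ i j, i ≠ j → ξ i j = w i j * (σ i n * t i - σ j n * t j)) (hξdiag : ∀ i, ξ i i = 0)
    (i j : ι) : ξ i j = contactCoeff w σ n t i j := by
  obtain rfl | hij := eq_or_ne i j
  · rw [hξdiag, contactCoeff_self]
  · exact hξ i j hij

theorem YoungRelation.contactCoeff_eq {σ : ι → ι → R} {n : ι} {t : ι → R} {e : ι' → ι} {m : ι'}
    {t' : ι' → R} (h : YoungRelation σ n t e m t') (w : ι → ι → R) (i j : ι') :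
    contactCoeff (fun i j ↦ w (e i) (e j)) (fun i j ↦ σ (e i) (e j)) m t' i j =
      contactCoeff w σ n t (e i) (e j) := by
  simp only [contactCoeff, h i, h j, sub_sub_sub_cancel_right]

end Ring

section Field

variable {K : Type*} [Field K]

theorem youngRelation_of_eq_div {σ : ι → ι → K} {n : ι} {t : ι → K} {e : ι' → ι} {m : ι'}
    {t' : ι' → K} (hσ : ∀ i, i ≠ m → σ (e i) (e m) ≠ 0)
    (ht' : ∀ i, i ≠ m →
      t' i = (σ (e i) n * t (e i) - σ (e m) n * t (e m)) / σ (e i) (e m))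
    (ht'm : t' m = 0) : YoungRelation σ n t e m t' := by
  intro i
  obtain rfl | hi := eq_or_ne i m
  · rw [ht'm, mul_zero, sub_self]
  · rw [ht' i hi, mul_div_cancel₀ _ (hσ i hi)]

theorem stmt14_general {w σ ξ : ι → ι → K} {n : ι} {t : ι → K} {e : ι' → ι} {m : ι'}
    {t' : ι' → K} {ξ' : ι' → ι' → K}
    (hσ : ∀ i, i ≠ m → σ (e i) (e m) ≠ 0)
    (hξ : ∀ i j, i ≠ j → ξ i j = w i j * (σ i n * t i - σ j n * t j))
    (hξdiag : ∀ i, ξ i i = 0)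
    (ht' : ∀ i, i ≠ m →
      t' i = (σ (e i) n * t (e i) - σ (e m) n * t (e m)) / σ (e i) (e m))
    (ht'm : t' m = 0)
    (hξ' : ∀ i j, i ≠ j →
      ξ' i j = w (e i) (e j) * (σ (e i) (e m) * t' i - σ (e j) (e m) * t' j))
    (hξ'diag : ∀ i, ξ' i i = 0) (i j : ι') :
    ξ' i j = ξ (e i) (e j) := by
  have young : YoungRelation σ n t e m t' := youngRelation_of_eq_div hσ ht' ht'm
  calc
    ξ' i j = contactCoeff (fun i j ↦ w (e i) (e j)) (fun i j ↦ σ (e i) (e j)) m t' i j :=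
      eq_contactCoeff_of_offDiag hξ' hξ'diag i j
    _ = contactCoeff w σ n t (e i) (e j) := young.contactCoeff_eq w i j
    _ = ξ (e i) (e j) := (eq_contactCoeff_of_offDiag hξ hξdiag _ _).symm

end Field

/-- Removal of phase `N`. With `ξ_{ij} = (√2/(η σ_{ij}))(σ_{iN}t_i − σ_{jN}t_j)`
(`t_N = 0`), `σ'_{ij} = σ_{ij}` and `t'_i = (σ_{iN}t_i − σ_{N−1,N}t_{N−1})/σ_{i,N−1}` for
`i ≤ N−2`, `t'_{N−1} = 0`, the reduced coefficients
`ξ'_{ij} = (√2/(η σ'_{ij}))(σ'_{i,N−1}t'_i − σ'_{j,N−1}t'_j)` satisfy `ξ'_{ij} = ξ_{ij}`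
for all `1 ≤ i,j ≤ N−1`. -/
theorem stmt14 (N : ℕ) (hN : 3 ≤ N) (η : ℝ) (hη : 0 < η)
    (σ : Fin N → Fin N → ℝ)
    (hσsymm : ∀ i j, σ i j = σ j i)
    (hσdiag : ∀ i, σ i i = 0)
    (hσpos : ∀ i j, i ≠ j → 0 < σ i j)
    (t : Fin N → ℝ) (htN : t ⟨N - 1, by omega⟩ = 0)
    (ξ : Fin N → Fin N → ℝ)
    (hξ : ∀ i j, i ≠ j → ξ i j = Real.sqrt 2 / (η * σ i j) *
      (σ i ⟨N - 1, by omega⟩ * t i - σ j ⟨N - 1, by omega⟩ * t j))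
    (hξdiag : ∀ i, ξ i i = 0)
    (t' : Fin (N - 1) → ℝ)
    (ht' : ∀ (i : Fin (N - 1)), (i : ℕ) < N - 2 → t' i =
      (σ (Fin.castLE (N.sub_le 1) i) ⟨N - 1, by omega⟩ * t (Fin.castLE (N.sub_le 1) i)
        - σ ⟨N - 2, by omega⟩ ⟨N - 1, by omega⟩ * t ⟨N - 2, by omega⟩)
      / σ (Fin.castLE (N.sub_le 1) i) ⟨N - 2, by omega⟩)
    (ht'last : t' ⟨N - 2, by omega⟩ = 0)
    (ξ' : Fin (N - 1) → Fin (N - 1) → ℝ)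
    (hξ' : ∀ i j : Fin (N - 1), i ≠ j → ξ' i j =
      Real.sqrt 2 / (η * σ (Fin.castLE (N.sub_le 1) i) (Fin.castLE (N.sub_le 1) j)) *
        (σ (Fin.castLE (N.sub_le 1) i) ⟨N - 2, by omega⟩ * t' i
          - σ (Fin.castLE (N.sub_le 1) j) ⟨N - 2, by omega⟩ * t' j))
    (hξ'diag : ∀ i, ξ' i i = 0) :
    ∀ i j : Fin (N - 1), ξ' i j = ξ (Fin.castLE (N.sub_le 1) i) (Fin.castLE (N.sub_le 1) j) :=
  stmt14_general (fun _ hi ↦ (hσpos _ _ ((Fin.castLE_injective (N.sub_le 1)).ne hi)).ne')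
    hξ hξdiag (fun i hi ↦ ht' i (by grind)) ht'last hξ' hξ'diag
end

section
/- Let N ≥ 3, η > 0, and σ = (σ_{ij}) symmetric with σ_{ij} > 0 for i ≠ j and σ_{ii} = 0. Let t ∈ ℝ^N with t_N = 0, and define ξ_{ij} = (√2/(η·σ_{ij}))·(σ_{iN}·t_i − σ_{jN}·t_j) for i ≠ j and ξ_{ii} = 0. Fix k ≤ N−1 and let δ : {1,…,N−1} → {1,…,N} be the increasing bijection onto {1,…,N}∖{k} (so δ(N−1) = N). Define σ'_{ij} = σ_{δ(i)δ(j)}, t'_i = t_{δ(i)}, and ξ'_{ij} = (√2/(η·σ'_{ij}))·(σ'_{i,N−1}·t'_i − σ'_{j,N−1}·t'_j) for i ≠ j, ξ'_{ii} = 0. Then ξ'_{ij} = ξ_{δ(i)δ(j)} for all 1 ≤ i,j ≤ N−1; moreover, for every c ∈ ℝ^N with c_k = 0, setting c'_i = c_{δ(i)}, one has Σ_{j=1}^{N−1} ξ'_{ij}·c'_i·c'_j = Σ_{j=1}^{N} ξ_{δ(i)j}·c_{δ(i)}·c_j for each 1 ≤ i ≤ N−1, and Σ_{j=1}^{N} ξ_{kj}·c_k·c_j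 = 0. (The N-phase contact-angle boundary condition reduces to the (N−1)-phase one when fluid k, k ≤ N−1, is absent.) -/
/-!
The coefficient `ξ i j` involves no phases other than `i`, `j` and the reference phase `N`.
Since `k ≠ N`, the increasing enumeration `δ` of the remaining phases sends the last index to `N`,
so the reduced system has the same reference phase and hence the same coefficients. Passing to the
reduced system drops only the term `j = k` from each boundary sum, and it contains the factor
`c k = 0`.
-/

open Function

/-- `ξ` is the array of contact-angle coefficients of a system of phases indexed by `ι`, with
surface tensions `σ`, cosines of contact angles `t` and reference phase `r` (the paper's phase `N`).
The prefactor `√2 / (η σ i j)` enters only as an arbitrary weight `w i j`, so that no division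
occurs. -/
structure IsContactAngleCoeff {ι R : Type*} [NonUnitalNonAssocRing R]
    (w σ : ι → ι → R) (t : ι → R) (r : ι) (ξ : ι → ι → R) : Prop where
  off_diag : ∀ i j, i ≠ j → ξ i j = w i j * (σ i r * t i - σ j r * t j)
  diag : ∀ i, ξ i i = 0

namespace IsContactAngleCoeff

variable {ι κ R : Type*} [NonUnitalNonAssocRing R] {w σ ξ ξ₁ ξ₂ : ι → ι → R} {t : ι → R}

theorem unique {r : ι} (h₁ : IsContactAngleCoeff w σ t r ξ₁)
    (h₂ : IsContactAngleCoeff w σ t r ξ₂) : ξ₁ = ξ₂ := by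
  ext i j
  obtain rfl | hij := eq_or_ne i j
  · rw [h₁.diag, h₂.diag]
  · rw [h₁.off_diag i j hij, h₂.off_diag i j hij]

theorem comp_injective {δ : κ → ι} {r : κ} (h : IsContactAngleCoeff w σ t (δ r) ξ)
    (hδ : Injective δ) :
    IsContactAngleCoeff (fun i j ↦ w (δ i) (δ j)) (fun i j ↦ σ (δ i) (δ j)) (t ∘ δ) r
      (fun i j ↦ ξ (δ i) (δ j)) where
  off_diag i j hij := h.off_diag (δ i) (δ j) (hδ.ne hij)
  diag i := h.diag (δ i)

end IsContactAngleCoeff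

/-- The right-hand side `∑ j, ξ i j * c i * c j` of the contact-angle boundary condition
`n·∇cᵢ = ∑ j, ξ i j * c i * c j`, for phase `i` and volume fractions `c`. -/
def boundarySum {ι R : Type*} [Fintype ι] [NonUnitalNonAssocSemiring R]
    (ξ : ι → ι → R) (c : ι → R) (i : ι) : R :=
  ∑ j, ξ i j * c i * c j

section BoundarySum

variable {ι κ R : Type*} [Fintype ι] [Fintype κ] [NonUnitalNonAssocSemiring R]
  (ξ : ι → ι → R) {c : ι → R}

theorem boundarySum_eq_zero {i : ι} (hc : c i = 0) : boundarySum ξ c i = 0 := by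
  simp [boundarySum, hc]

theorem boundarySum_comp_injective {δ : κ → ι} (hδ : Injective δ)
    (hc : ∀ j ∉ Set.range δ, c j = 0) (i : κ) :
    boundarySum (fun j k ↦ ξ (δ j) (δ k)) (c ∘ δ) i = boundarySum ξ c (δ i) :=
  Fintype.sum_of_injective δ hδ _ _ (fun j hj ↦ by rw [hc j hj, mul_zero]) fun _ ↦ rfl

end BoundarySum

theorem apply_isTop_eq_of_isMax_of_mem_range {α β : Type*} [Preorder α] [PartialOrder β]
    {f : α → β} (hf : Monotone f) {a : α} (ha : IsTop a) {b : β} (hb : IsMax b)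
    (hbf : b ∈ Set.range f) : f a = b := by
  obtain ⟨x, rfl⟩ := hbf
  exact hb.eq_of_ge (hf (ha x))

theorem stmt15_general {ι κ R : Type*} [Fintype ι] [Fintype κ] [NonUnitalNonAssocRing R]
    {w σ ξ : ι → ι → R} {t : ι → R} {ξ' : κ → κ → R} {r : κ} {δ : κ → ι} (hδ : Injective δ)
    {absent : Set ι} (hrange : Set.range δ = absentᶜ)
    (hξ : IsContactAngleCoeff w σ t (δ r) ξ)
    (hξ' : IsContactAngleCoeff (fun i j ↦ w (δ i) (δ j)) (fun i j ↦ σ (δ i) (δ j)) (t ∘ δ) r ξ') :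
    (∀ i j, ξ' i j = ξ (δ i) (δ j))
    ∧ ∀ c : ι → R, (∀ k ∈ absent, c k = 0) →
        (∀ i, boundarySum ξ' (c ∘ δ) i = boundarySum ξ c (δ i))
        ∧ ∀ k ∈ absent, boundarySum ξ c k = 0 := by
  obtain rfl := hξ'.unique (hξ.comp_injective hδ)
  refine ⟨fun _ _ ↦ rfl, fun c hc ↦ ⟨?_, fun k hk ↦ boundarySum_eq_zero ξ (hc k hk)⟩⟩
  exact boundarySum_comp_injective ξ hδ fun j hj ↦ hc j (by simpa [hrange] using hj)

/-- Removal of phase `k ≤ N−1`. With `δ` the increasing bijection of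
`{1,…,N−1}` onto `{1,…,N}∖{k}` (so `δ(N−1) = N`), `σ'_{ij} = σ_{δ(i)δ(j)}`,
`t'_i = t_{δ(i)}`, and `ξ'` built from `σ', t'` as `ξ` is built from `σ, t`, one has
`ξ'_{ij} = ξ_{δ(i)δ(j)}`; moreover for every `c` with `c_k = 0`, the reduced boundary
sums agree with the original ones, and `Σ_j ξ_{kj} c_k c_j = 0`. -/
theorem stmt15 (N : ℕ) (hN : 3 ≤ N) (η : ℝ) (hη : 0 < η)
    (σ : Fin N → Fin N → ℝ)
    (hσsymm : ∀ i j, σ i j = σ j i)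
    (hσdiag : ∀ i, σ i i = 0)
    (hσpos : ∀ i j, i ≠ j → 0 < σ i j)
    (t : Fin N → ℝ) (htN : t ⟨N - 1, by omega⟩ = 0)
    (ξ : Fin N → Fin N → ℝ)
    (hξ : ∀ i j, i ≠ j → ξ i j = Real.sqrt 2 / (η * σ i j) *
      (σ i ⟨N - 1, by omega⟩ * t i - σ j ⟨N - 1, by omega⟩ * t j))
    (hξdiag : ∀ i, ξ i i = 0)
    (k : Fin N) (hk : (k : ℕ) < N - 1)
    (δ : Fin (N - 1) → Fin N) (hδmono : StrictMono δ) (hδrange : Set.range δ = {k}ᶜ)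
    (t' : Fin (N - 1) → ℝ) (ht' : ∀ i, t' i = t (δ i))
    (ξ' : Fin (N - 1) → Fin (N - 1) → ℝ)
    (hξ' : ∀ i j : Fin (N - 1), i ≠ j → ξ' i j =
      Real.sqrt 2 / (η * σ (δ i) (δ j)) *
        (σ (δ i) (δ ⟨N - 2, by omega⟩) * t' i - σ (δ j) (δ ⟨N - 2, by omega⟩) * t' j))
    (hξ'diag : ∀ i, ξ' i i = 0) :
    (∀ i j : Fin (N - 1), ξ' i j = ξ (δ i) (δ j))
    ∧ ∀ c : Fin N → ℝ, c k = 0 →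
        (∀ i : Fin (N - 1),
          ∑ j : Fin (N - 1), ξ' i j * c (δ i) * c (δ j)
            = ∑ j : Fin N, ξ (δ i) j * c (δ i) * c j)
        ∧ ∑ j : Fin N, ξ k j * c k * c j = 0 := by
  obtain rfl : t' = t ∘ δ := funext ht'
  have hlast : δ ⟨N - 2, by omega⟩ = ⟨N - 1, by omega⟩ :=
    apply_isTop_eq_of_isMax_of_mem_range hδmono.monotone (fun i ↦ Nat.le_sub_one_of_lt i.is_lt)
      (IsTop.isMax fun i ↦ Nat.le_sub_one_of_lt i.is_lt) (hδrange ▸ Fin.ne_of_gt hk)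
  simpa only [Set.mem_singleton_iff, forall_eq, boundarySum, comp_apply] using
    stmt15_general (w := fun i j ↦ √2 / (η * σ i j)) hδmono.injective hδrange
      ⟨hlast ▸ hξ, hξdiag⟩ ⟨hξ', hξ'diag⟩
end
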